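/- Poisson-summation formula for the projector P_{N,θ}: for every integer N ≥ 1, every θ = (θ₁,θ₂) ∈ ℝⁿ×ℝⁿ, and all Schwartz functions f, g ∈ 𝒮(ℝⁿ), one has Σ_{w∈ℤ^{2n}} e^{−2πiσ(θ,w)} ∫_{ℝⁿ} (ρ_N(w, e^{πiQ(w)})f)(y) g(y) dy = N^{−n} Σ_{j∈{0,…,N−1}ⁿ} ( Σ_{k∈ℤⁿ} e^{2πi⟨θ₂,k⟩} f(k + (j−θ₁)/N) ) · ( Σ_{k∈ℤⁿ} e^{−2πi⟨θ₂,k⟩} g(k + (j−θ₁)/N) ), where all series converge absolutely. Equivalently, P_{N,θ} f = Σ_{j∈{0,…,N−1}ⁿ} ⟨e^{(θ₁,−θ₂)}_j, f⟩ e^θ_j in 𝒮'(ℝⁿ). -/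

import Mathlib

open BigOperators

/-- The standard symplectic form `σ((q,p),(q',p')) = ⟨p,q'⟩ − ⟨p',q⟩` on
`ℝ^{2n} = ℝⁿ × ℝⁿ`, a point `x` being written as a pair `x = (q,p)`. -/
def sigmaR (n : ℕ) (x y : (Fin n → ℝ) × (Fin n → ℝ)) : ℝ :=
  (∑ i : Fin n, x.2 i * y.1 i) - ∑ i : Fin n, y.2 i * x.1 i

/-- `Q((q,p)) = ⟨q,p⟩`. -/
def QR (n : ℕ) (x : (Fin n → ℝ) × (Fin n → ℝ)) : ℝ :=
  ∑ i : Fin n, x.1 i * x.2 i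

/-- The Schrödinger representation operator:
`(ρ_N(x,ζ)f)(y) = ζ^N e^{2πiN(⟨p,y⟩ − ⟨q,p⟩/2)} f(y−q)` for `x = (q,p)`. -/
noncomputable def rho (n N : ℕ) (x : (Fin n → ℝ) × (Fin n → ℝ)) (ζ : ℂ)
    (f : (Fin n → ℝ) → ℂ) : (Fin n → ℝ) → ℂ :=
  fun y => ζ ^ N * Complex.exp (2 * Real.pi * Complex.I * (N : ℂ) *
      (((∑ i : Fin n, x.2 i * y i : ℝ) : ℂ) - ((QR n x : ℝ) : ℂ) / 2)) * f (y - x.1)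

/-- Coercion of an integer lattice point `w ∈ ℤ^{2n}` into `ℝ^{2n}`. -/
def castVec (n : ℕ) (w : (Fin n → ℤ) × (Fin n → ℤ)) : (Fin n → ℝ) × (Fin n → ℝ) :=
  (fun i => (w.1 i : ℝ), fun i => (w.2 i : ℝ))

/-- The pairing of the Dirac comb `e^θ_j` against a test function:
`e^θ_j(f) = N^{−n/2} Σ_{k∈ℤⁿ} e^{−2πi⟨θ₂,k⟩} f(k + (j−θ₁)/N)`. -/
noncomputable def comb (n N : ℕ) (θ : (Fin n → ℝ) × (Fin n → ℝ)) (j : Fin n → ℤ)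
    (f : (Fin n → ℝ) → ℂ) : ℂ :=
  (((N : ℝ) ^ (-(n : ℝ) / 2) : ℝ) : ℂ) *
    ∑' k : Fin n → ℤ,
      Complex.exp (-(2 * Real.pi * Complex.I) *
          ((∑ i : Fin n, θ.2 i * (k i : ℝ) : ℝ) : ℂ)) *
        f (fun i => (k i : ℝ) + ((j i : ℝ) - θ.1 i) / N)

/-- The transformed test function defining the dual action of `ρ_N(x,ζ)` on tempered
distributions by `(ρ_N(x,ζ)ν)(f) := ν(f̃)`, namely
`f̃(z) = ζ^N e^{2πiN(⟨p,z⟩ + ⟨q,p⟩/2)} f(z+q)` for `x = (q,p)`. -/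
noncomputable def rhoDualTest (n N : ℕ) (x : (Fin n → ℝ) × (Fin n → ℝ)) (ζ : ℂ)
    (f : (Fin n → ℝ) → ℂ) : (Fin n → ℝ) → ℂ :=
  fun z => ζ ^ N * Complex.exp (2 * Real.pi * Complex.I * (N : ℂ) *
      (((∑ i : Fin n, x.2 i * z i : ℝ) : ℂ) + ((QR n x : ℝ) : ℂ) / 2)) * f (z + x.1)

open MeasureTheory

def zc {n : ℕ} (k : Fin n → ℤ) : Fin n → ℝ := fun i => (k i : ℝ)

noncomputable def chi {n : ℕ} (m x : Fin n → ℝ) : ℂ :=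
  Complex.exp (2 * Real.pi * Complex.I * ((∑ i : Fin n, m i * x i : ℝ) : ℂ))

lemma zc_add {n : ℕ} (k l : Fin n → ℤ) : zc (k + l) = zc k + zc l := by
  ext i; simp [zc]

lemma zc_sub {n : ℕ} (k l : Fin n → ℤ) : zc (k - l) = zc k - zc l := by
  ext i; simp [zc]

lemma chi_norm {n : ℕ} (m x : Fin n → ℝ) : ‖chi m x‖ = 1 := by
  unfold chi
  rw [show 2 * (Real.pi : ℂ) * Complex.I * ((∑ i : Fin n, m i * x i : ℝ) : ℂ)
    = ((2 * Real.pi * ∑ i : Fin n, m i * x i : ℝ) : ℂ) * Complex.I by push_cast; ring]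
  exact Complex.norm_exp_ofReal_mul_I _

lemma chi_continuous {n : ℕ} (m : Fin n → ℝ) : Continuous (chi m) := by
  unfold chi
  fun_prop

lemma chi_add {n : ℕ} (m x y : Fin n → ℝ) : chi m (x + y) = chi m x * chi m y := by
  unfold chi
  rw [← Complex.exp_add]
  congr 1
  simp only [Pi.add_apply, mul_add, Finset.sum_add_distrib]
  push_cast; ring

lemma chi_zc {n : ℕ} (m k : Fin n → ℤ) : chi (zc m) (zc k) = 1 := by
  unfold chi zc
  rw [show 2 * (Real.pi : ℂ) * Complex.I * ((∑ i : Fin n, (m i : ℝ) * (k i : ℝ) : ℝ) : ℂ)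
    = ((∑ i : Fin n, m i * k i : ℤ) : ℂ) * (2 * Real.pi * Complex.I) by push_cast; ring]
  exact Complex.exp_int_mul_two_pi_mul_I _

lemma peetre {E : Type*} [SeminormedAddCommGroup E] (x k : E) :
    1 + ‖k‖ ≤ (1 + ‖x + k‖) * (1 + ‖x‖) := by
  have h : ‖k‖ ≤ ‖x + k‖ + ‖x‖ := by
    have := norm_sub_le (x + k) x
    simpa using this
  nlinarith [norm_nonneg (x + k), norm_nonneg x, mul_nonneg (norm_nonneg (x + k)) (norm_nonneg x)]

lemma summable_zc (n : ℕ) :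
    Summable (fun k : Fin n → ℤ => ((1 + ‖zc k‖) ^ (n + 1))⁻¹) := by
  classical
  let L : Submodule ℤ (Fin n → ℝ) := Submodule.span ℤ (Set.range (Pi.basisFun ℝ (Fin n)))
  have hmem : ∀ k : Fin n → ℤ, zc k ∈ L := by
    intro k
    have : zc k = ∑ i, k i • (Pi.basisFun ℝ (Fin n)) i := by
      ext j
      simp [zc, Finset.sum_apply, Pi.single_apply]
    rw [this]
    exact Submodule.sum_mem _ fun i _ => Submodule.smul_mem _ _ (Submodule.subset_span ⟨i, rfl⟩)
  have hr : Module.finrank ℤ L = n := by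
    rw [ZLattice.rank ℝ L]; simp
  have h := ZLattice.summable_norm_sub_inv_pow L (n + 1) (by rw [hr]; omega) 0
  have hinj : Function.Injective (fun k : Fin n → ℤ => (⟨zc k, hmem k⟩ : L)) := by
    intro k l hkl
    have : zc k = zc l := congrArg Subtype.val hkl
    ext i
    have := congrFun this i
    simpa [zc] using this
  have h2 := h.comp_injective hinj
  refine Summable.of_norm_bounded_eventually (g := fun k => ‖zc k‖⁻¹ ^ (n+1)) ?_ ?_
  · refine h2.congr fun k => ?_
    simp
  · refine (Set.finite_singleton (0 : Fin n → ℤ)).subset ?_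
    intro k hk
    by_contra hne
    apply hk
    have hk0 : zc k ≠ 0 := by
      intro h0; apply hne
      ext i
      have := congrFun h0 i
      simpa [zc] using this
    have hpos : 0 < ‖zc k‖ := norm_pos_iff.mpr hk0
    show ‖((1 + ‖zc k‖) ^ (n + 1))⁻¹‖ ≤ ‖zc k‖⁻¹ ^ (n + 1)
    rw [Real.norm_of_nonneg (by positivity), inv_pow]
    gcongr
    linarith

lemma summable_decay {n : ℕ} (H : (Fin n → ℝ) → ℂ) (C : ℝ)
    (hd : ∀ x, (1 + ‖x‖) ^ (n + 1) * ‖H x‖ ≤ C) (x : Fin n → ℝ) :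
    Summable (fun k : Fin n → ℤ => ‖H (x + zc k)‖) ∧
    ∀ k : Fin n → ℤ, ‖H (x + zc k)‖ ≤ C * (1 + ‖x‖) ^ (n + 1) * ((1 + ‖zc k‖) ^ (n + 1))⁻¹ := by
  have hb : ∀ k : Fin n → ℤ,
      ‖H (x + zc k)‖ ≤ C * (1 + ‖x‖) ^ (n + 1) * ((1 + ‖zc k‖) ^ (n + 1))⁻¹ := by
    intro k
    rw [← div_eq_mul_inv, le_div_iff₀ (by positivity)]
    calc ‖H (x + zc k)‖ * (1 + ‖zc k‖) ^ (n + 1)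
        ≤ ‖H (x + zc k)‖ * ((1 + ‖x + zc k‖) * (1 + ‖x‖)) ^ (n + 1) := by
          gcongr; exact peetre _ _
      _ = ((1 + ‖x + zc k‖) ^ (n + 1) * ‖H (x + zc k)‖) * (1 + ‖x‖) ^ (n + 1) := by
          rw [mul_pow]; ring
      _ ≤ C * (1 + ‖x‖) ^ (n + 1) := by
          gcongr; exact hd _
  exact ⟨Summable.of_nonneg_of_le (fun _ => norm_nonneg _) hb ((summable_zc n).mul_left _), hb⟩

lemma integrable_bracket (n : ℕ) :
    Integrable (fun x : Fin n → ℝ => ((1 + ‖x‖) ^ (n + 1))⁻¹) := by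
  have h := integrable_one_add_norm (E := Fin n → ℝ) (μ := volume) (r := (n : ℝ) + 1) (by simp)
  refine h.congr (Filter.Eventually.of_forall fun x => ?_)
  simp only
  rw [Real.rpow_neg (by positivity)]
  norm_cast

lemma integrable_decay {n : ℕ} (H : (Fin n → ℝ) → ℂ) (hc : Continuous H) (C : ℝ)
    (hd : ∀ x, (1 + ‖x‖) ^ (n + 1) * ‖H x‖ ≤ C) : Integrable H := by
  refine ((integrable_bracket n).const_mul C).mono' hc.aestronglyMeasurable
    (Filter.Eventually.of_forall fun x => ?_)
  rw [← div_eq_mul_inv, le_div_iff₀ (by positivity), mul_comm]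
  exact hd x

/-- half-open unit cube at `k` -/
def cube {n : ℕ} (k : Fin n → ℤ) : Set (Fin n → ℝ) := {x | ∀ i, x i ∈ Set.Ioc (k i : ℝ) (k i + 1)}

lemma cube_meas {n : ℕ} (k : Fin n → ℤ) : MeasurableSet (cube k) :=
  MeasurableSet.univ_pi' (fun _ => measurableSet_Ioc)

lemma mem_cube {n : ℕ} (k : Fin n → ℤ) (x : Fin n → ℝ) :
    x ∈ cube k ↔ (fun i => ⌈x i⌉ - 1) = k := by
  rw [funext_iff]
  refine forall_congr' fun i => ?_
  rw [Set.mem_Ioc, sub_eq_iff_eq_add, Int.ceil_eq_iff]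
  push_cast
  simp

lemma integral_cubes {n : ℕ} (F : (Fin n → ℝ) → ℂ) (hF : Integrable F) :
    HasSum (fun k : Fin n → ℤ => ∫ x in cube 0, F (x + zc k)) (∫ x, F x) := by
  have hU : (⋃ k : Fin n → ℤ, cube k) = Set.univ := by
    ext x; simp [mem_cube]
  have h := hasSum_integral_iUnion (f := F) (μ := volume) (s := fun k : Fin n → ℤ => cube k)
    cube_meas (by
      intro k l hkl
      refine Set.disjoint_left.mpr fun x hx hx' => hkl ?_
      rw [mem_cube] at hx hx'
      exact hx.symm.trans hx') hF.integrableOn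
  rw [hU, setIntegral_univ] at h
  refine h.congr_fun fun k => ?_
  have := (measurePreserving_add_right (volume : Measure (Fin n → ℝ)) (zc k)).setIntegral_preimage_emb
    (measurableEmbedding_addRight (zc k)) F (cube k)
  rw [← this]
  congr 2
  ext x
  simp only [Set.mem_preimage, cube, Set.mem_ofPred_eq, Set.mem_Ioc, zc, Pi.add_apply, Pi.zero_apply]
  refine forall_congr' fun i => ?_
  constructor <;> rintro ⟨h1, h2⟩ <;> constructor <;> push_cast at * <;> linarith

lemma poisson {n : ℕ} (H : (Fin n → ℝ) → ℂ) (hc : Continuous H) (C : ℝ)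
    (hd : ∀ x, (1 + ‖x‖) ^ (n + 1) * ‖H x‖ ≤ C)
    (hs : Summable fun m : Fin n → ℤ => ∫ x, chi (zc m) x * H x) :
    ∑' m : Fin n → ℤ, ∫ x, chi (zc m) x * H x = ∑' k : Fin n → ℤ, H (zc k) := by
  have hC : 0 ≤ C := le_trans (by positivity) (hd 0)
  let G : (Fin n → ℝ) → ℂ := fun x => ∑' k : Fin n → ℤ, H (x + zc k)
  have hGc : Continuous G := by
    rw [continuous_iff_continuousAt]
    intro x
    have : ContinuousOn G (Metric.ball 0 (‖x‖ + 1)) := by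
      refine continuousOn_tsum (u := fun k => C * (1 + (‖x‖ + 1)) ^ (n + 1) * ((1 + ‖zc k‖) ^ (n + 1))⁻¹)
        (fun k => (hc.comp (continuous_add_const _)).continuousOn) ((summable_zc n).mul_left _) ?_
      intro k y hy
      refine ((summable_decay H C hd y).2 k).trans ?_
      have : ‖y‖ ≤ ‖x‖ + 1 := by simpa using (mem_ball_zero_iff.mp hy).le
      gcongr
    refine this.continuousAt (Metric.isOpen_ball.mem_nhds ?_)
    simp
  have hGper : ∀ x (l : Fin n → ℤ), G (x + zc l) = G x := by
    intro x l
    show ∑' k : Fin n → ℤ, H (x + zc l + zc k) = ∑' k : Fin n → ℤ, H (x + zc k)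
    rw [← (Equiv.addLeft l).tsum_eq (fun k => H (x + zc k))]
    refine tsum_congr fun k => ?_
    simp [zc_add, add_assoc]
  let q : (Fin n → ℝ) → UnitAddTorus (Fin n) := Pi.map (fun _ (t : ℝ) => (t : UnitAddCircle))
  have hq : IsOpenQuotientMap q := by
    refine IsOpenQuotientMap.piMap fun i => ?_
    exact QuotientAddGroup.isOpenQuotientMap_mk
  have hGq : ∀ x y, q x = q y → G x = G y := by
    intro x y hxy
    have : ∀ i, ∃ l : ℤ, x i = y i + l := by
      intro i
      have h := congrFun hxy i
      simp only [q, Pi.map_apply] at h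
      rw [QuotientAddGroup.eq] at h
      obtain ⟨l, hl⟩ := AddSubgroup.mem_zmultiples_iff.mp h
      refine ⟨-l, ?_⟩
      simp at hl
      push_cast
      linarith
    choose l hl using this
    have : x = y + zc l := funext hl
    rw [this, hGper]
  let g : UnitAddTorus (Fin n) → ℂ := fun t => G (Function.surjInv hq.surjective t)
  have hgq : ∀ x, g (q x) = G x := fun x => hGq _ _ (Function.surjInv_eq hq.surjective (q x))
  have hgc : Continuous g := by
    rw [hq.isQuotientMap.continuous_iff]
    refine hGc.congr fun x => (hgq x).symm
  let gc : C(UnitAddTorus (Fin n), ℂ) := ⟨g, hgc⟩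
  have hfour : ∀ m x, UnitAddTorus.mFourier m (q x) = chi (zc m) x := by
    intro m x
    simp only [UnitAddTorus.mFourier, ContinuousMap.coe_mk, q, Pi.map_apply, fourier_coe_apply, chi, zc]
    rw [← Complex.exp_sum]
    congr 1
    push_cast
    rw [Finset.mul_sum]
    refine Finset.sum_congr rfl fun i _ => ?_
    simp
    ring
  have hcoef : ∀ m, UnitAddTorus.mFourierCoeff gc m = ∫ x, chi (zc (-m)) x * H x := by
    intro m
    rw [UnitAddTorus.mFourierCoeff_eq_integral _ _ 0]
    have hint : Integrable (fun x => chi (zc (-m)) x * H x) := by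
      refine integrable_decay _ ((chi_continuous _).mul hc) C fun x => ?_
      rw [norm_mul, chi_norm, one_mul]; exact hd x
    have hcub := integral_cubes _ hint
    rw [← hcub.tsum_eq]
    have e1 : {x : Fin n → ℝ | ∀ i, x i ∈ Set.Ioc ((0 : Fin n → ℝ) i) ((0 : Fin n → ℝ) i + 1)}
        = cube 0 := by
      ext x; simp [cube]
    rw [e1]
    have e2 : ∀ x : Fin n → ℝ, UnitAddTorus.mFourier (-m) (fun i => (x i : UnitAddCircle)) •
        gc (fun i => (x i : UnitAddCircle)) = ∑' k : Fin n → ℤ, chi (zc (-m)) (x + zc k) * H (x + zc k) := by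
      intro x
      have a1 := hfour (-m) x
      have a2 := hgq x
      have a3 : q x = fun i => (x i : UnitAddCircle) := rfl
      rw [a3] at a1 a2
      rw [a1]
      show _ • g _ = _
      rw [a2, smul_eq_mul, ← tsum_mul_left]
      refine tsum_congr fun k => ?_
      rw [chi_add, chi_zc, mul_one]
    simp_rw [e2]
    symm
    refine (hasSum_integral_of_summable_integral_norm ?_ ?_).tsum_eq
    · intro k
      exact (hint.comp_add_right (zc k)).integrableOn
    · have hn := integral_cubes (fun x => ((‖chi (zc (-m)) x * H x‖ : ℝ) : ℂ)) hint.norm.ofReal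
      have := hn.summable
      simp_rw [integral_complex_ofReal] at this
      exact Complex.summable_ofReal.mp this
  have hsum : Summable (UnitAddTorus.mFourierCoeff gc) := by
    have : Summable fun m : Fin n → ℤ => ∫ x, chi (zc (-m)) x * H x :=
      (Equiv.neg (Fin n → ℤ)).summable_iff.mpr hs
    exact this.congr fun m => (hcoef m).symm
  have hfin := (UnitAddTorus.hasSum_mFourier_series_apply_of_summable hsum (q 0)).tsum_eq
  have h0 : gc (q 0) = ∑' k : Fin n → ℤ, H (zc k) := by
    show g (q 0) = _
    rw [hgq]
    simp [G]
  rw [h0] at hfin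
  rw [← hfin, ← (Equiv.neg (Fin n → ℤ)).tsum_eq]
  refine tsum_congr fun m => ?_
  rw [hfour, hcoef]
  simp [chi]

lemma decay_all {n : ℕ} (f : SchwartzMap (Fin n → ℝ) ℂ) (A K : ℕ) :
    ∃ C : ℝ, 0 ≤ C ∧ ∀ j ≤ K, ∀ x, ‖iteratedFDeriv ℝ j f x‖ ≤ C * ((1 + ‖x‖) ^ A)⁻¹ := by
  refine ⟨2 ^ A * (Finset.Iic (A, K)).sup (fun m => SchwartzMap.seminorm ℝ m.1 m.2) f, ?_,
    fun j hj x => ?_⟩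
  · positivity
  · rw [← div_eq_mul_inv, le_div_iff₀ (by positivity), mul_comm]
    exact SchwartzMap.one_add_le_sup_seminorm_apply (𝕜 := ℝ) (m := (A, K)) le_rfl hj f x

lemma prod_decay {n : ℕ} (f g : SchwartzMap (Fin n → ℝ) ℂ) (A K : ℕ) :
    ∃ C : ℝ, 0 ≤ C ∧ ∀ j ≤ K, ∀ m x : Fin n → ℝ,
      ‖iteratedFDeriv ℝ j (fun y => f (y - m) * g y) x‖
        ≤ C * ((1 + ‖m‖) ^ A)⁻¹ * ((1 + ‖x‖) ^ A)⁻¹ := by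
  obtain ⟨Cf, hCf, hf⟩ := decay_all f A K
  obtain ⟨Cg, hCg, hg⟩ := decay_all g (A + A) K
  refine ⟨2 ^ K * (Cf * Cg), by positivity, fun j hj m x => ?_⟩
  have hfs : ContDiff ℝ (j : ℕ∞) (fun y => f (y - m)) :=
    (f.smooth j).comp (contDiff_id.sub contDiff_const)
  refine (norm_iteratedFDeriv_mul_le hfs (g.smooth j) x le_rfl).trans ?_
  have key : ∀ i ∈ Finset.range (j + 1),
      (j.choose i : ℝ) * ‖iteratedFDeriv ℝ i (fun y => f (y - m)) x‖ * ‖iteratedFDeriv ℝ (j - i) g x‖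
      ≤ (j.choose i : ℝ) * (Cf * Cg * ((1 + ‖m‖) ^ A)⁻¹ * ((1 + ‖x‖) ^ A)⁻¹) := by
    intro i hi
    have hi' : i ≤ j := by simpa [Nat.lt_succ_iff] using hi
    rw [iteratedFDeriv_comp_sub, mul_assoc]
    refine mul_le_mul_of_nonneg_left ?_ (by positivity)
    have h1 := hf i (hi'.trans hj) (x - m)
    have h2 := hg (j - i) ((Nat.sub_le _ _).trans hj) x
    have hp : (1 + ‖m‖) ≤ (1 + ‖x - m‖) * (1 + ‖x‖) := by
      have := peetre (-x) m
      rwa [neg_add_eq_sub, norm_sub_rev, norm_neg] at this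
    calc _ ≤ (Cf * ((1 + ‖x - m‖) ^ A)⁻¹) * (Cg * ((1 + ‖x‖) ^ (A + A))⁻¹) := by gcongr
      _ = Cf * Cg * (((1 + ‖x - m‖) * (1 + ‖x‖)) ^ A)⁻¹ * ((1 + ‖x‖) ^ A)⁻¹ := by
        rw [pow_add, mul_pow, mul_inv, mul_inv]; ring
      _ ≤ _ := by gcongr
  refine (Finset.sum_le_sum key).trans ?_
  rw [← Finset.sum_mul]
  have h2 : (∑ i ∈ Finset.range (j + 1), (j.choose i : ℝ)) ≤ 2 ^ K := by
    have : (∑ i ∈ Finset.range (j + 1), (j.choose i : ℝ)) = 2 ^ j := by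
      exact_mod_cast Nat.sum_range_choose j
    rw [this]
    exact pow_le_pow_right₀ (by norm_num) hj
  calc _ ≤ 2 ^ K * (Cf * Cg * ((1 + ‖m‖) ^ A)⁻¹ * ((1 + ‖x‖) ^ A)⁻¹) := by gcongr
    _ = _ := by ring

/-- dot product as a continuous bilinear map -/
noncomputable def dotL (n : ℕ) : (Fin n → ℝ) →L[ℝ] (Fin n → ℝ) →L[ℝ] ℝ :=
  ∑ i : Fin n, (ContinuousLinearMap.proj (R := ℝ) (φ := fun _ : Fin n => ℝ) i).smulRight
    (ContinuousLinearMap.proj (R := ℝ) (φ := fun _ : Fin n => ℝ) i)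

lemma dotL_apply {n : ℕ} (v w : Fin n → ℝ) : dotL n v w = ∑ i, v i * w i := by
  simp [dotL]

lemma fourier_eq_chi {n : ℕ} (h : (Fin n → ℝ) → ℂ) (w : Fin n → ℝ) :
    VectorFourier.fourierIntegral Real.fourierChar volume (dotL n).toLinearMap₁₂ h (-w)
      = ∫ x, chi w x * h x := by
  unfold VectorFourier.fourierIntegral
  refine integral_congr_ae (Filter.Eventually.of_forall fun x => ?_)
  have e : (dotL n).toLinearMap₁₂ x (-w) = ∑ i, x i * (-w) i := dotL_apply x (-w)
  beta_reduce
  rw [e]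
  simp only [Circle.smul_def,
    Real.fourierChar_apply, chi, smul_eq_mul, Pi.neg_apply, mul_neg, Finset.sum_neg_distrib, neg_neg]
  congr 2
  rw [Finset.sum_congr rfl fun i _ => mul_comm (x i) (w i)]
  push_cast
  ring

lemma osc_bound {n : ℕ} (f g : SchwartzMap (Fin n → ℝ) ℂ) :
    ∃ C : ℝ, 0 ≤ C ∧ ∀ m w : Fin n → ℝ,
      ‖∫ x, chi w x * (f (x - m) * g x)‖
        ≤ C * ((1 + ‖m‖) ^ (n + 1))⁻¹ * ((1 + ‖w‖) ^ (n + 1))⁻¹ := by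
  obtain ⟨C, hC, h⟩ := prod_decay f g (n + 1) (n + 1)
  set J : ℝ := ∫ x : Fin n → ℝ, ((1 + ‖x‖) ^ (n + 1))⁻¹ with hJ
  have hJ0 : 0 ≤ J := integral_nonneg fun x => by positivity
  refine ⟨2 ^ (n + 1) * (2 ^ (n + 1) * ((n + 2 : ℕ) * (C * J))), by positivity, fun m w => ?_⟩
  have hsm : ContDiff ℝ ((n + 1 : ℕ) : ℕ∞) (fun y => f (y - m) * g y) :=
    ((f.smooth _).comp (contDiff_id.sub contDiff_const)).mul (g.smooth _)
  have hint : ∀ j ≤ n + 1, Integrable (fun v => ‖iteratedFDeriv ℝ j (fun y => f (y - m) * g y) v‖) := by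
    intro j hj
    refine ((integrable_bracket n).const_mul (C * ((1 + ‖m‖) ^ (n + 1))⁻¹)).mono' ?_
      (Filter.Eventually.of_forall fun x => ?_)
    · exact (hsm.continuous_iteratedFDeriv (by exact_mod_cast hj)).norm.aestronglyMeasurable
    · rw [norm_norm]; exact h j hj m x
  have hintle : ∀ j ≤ n + 1, ∫ v, ‖iteratedFDeriv ℝ j (fun y => f (y - m) * g y) v‖
      ≤ C * ((1 + ‖m‖) ^ (n + 1))⁻¹ * J := by
    intro j hj
    rw [hJ, ← integral_const_mul]
    exact integral_mono (hint j hj) ((integrable_bracket n).const_mul _) fun x => h j hj m x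
  have hI0 : ‖∫ x, chi w x * (f (x - m) * g x)‖ ≤ C * ((1 + ‖m‖) ^ (n + 1))⁻¹ * J := by
    refine (norm_integral_le_integral_norm _).trans ?_
    refine le_trans (le_of_eq ?_) (hintle 0 (by omega))
    refine integral_congr_ae (Filter.Eventually.of_forall fun x => ?_)
    simp only [norm_iteratedFDeriv_zero]
    rw [norm_mul, chi_norm, one_mul]
  have hIi : ∀ i, |w i| ^ (n + 1) * ‖∫ x, chi w x * (f (x - m) * g x)‖
      ≤ 2 ^ (n + 1) * ((n + 2 : ℕ) * (C * ((1 + ‖m‖) ^ (n + 1))⁻¹ * J)) := by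
    intro i
    have hh := VectorFourier.pow_mul_norm_iteratedFDeriv_fourierIntegral_le (dotL n) (μ := volume)
      (K := ((0 : ℕ) : ℕ∞)) (N := ((n + 1 : ℕ) : ℕ∞)) hsm (by
        intro k j hk hj
        have hk0 : k = 0 := by
          have : k ≤ 0 := by exact_mod_cast hk
          omega
        subst hk0
        simpa using hint j (by exact_mod_cast hj)) (k := 0) (n := n + 1) le_rfl le_rfl
        (Pi.single i 1) (-w)
    rw [norm_iteratedFDeriv_zero, fourier_eq_chi, dotL_apply] at hh
    have e1 : ∑ i', (Pi.single i (1 : ℝ) : Fin n → ℝ) i' * (-w) i' = - w i := by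
      simp [Pi.single_apply]
    have e2 : ‖(Pi.single i (1 : ℝ) : Fin n → ℝ)‖ = 1 := by
      rw [Pi.norm_single, norm_one]
    rw [e1, abs_neg, e2] at hh
    refine hh.trans ?_
    simp only [one_pow, pow_zero, mul_one, one_mul, Nat.cast_zero, mul_zero, zero_add]
    refine mul_le_mul_of_nonneg_left ?_ (by positivity)
    rw [Finset.sum_product]
    simp only [Finset.range_one, Finset.sum_singleton, pow_zero, one_mul]
    refine (Finset.sum_le_card_nsmul _ _ (C * ((1 + ‖m‖) ^ (n + 1))⁻¹ * J) fun j hj => ?_).trans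
      (le_of_eq ?_)
    · exact hintle j (by simpa [Nat.lt_succ_iff] using hj)
    · rw [Finset.card_range, nsmul_eq_mul]
  set I : ℝ := ‖∫ x, chi w x * (f (x - m) * g x)‖ with hI
  set B : ℝ := C * ((1 + ‖m‖) ^ (n + 1))⁻¹ * J with hB
  have hB0 : 0 ≤ B := by positivity
  have hBB : B ≤ 2 ^ (n + 1) * ((n + 2 : ℕ) * B) := by
    have h1 : (1 : ℝ) ≤ 2 ^ (n + 1) := one_le_pow₀ (by norm_num)
    have h2 : (1 : ℝ) ≤ ((n + 2 : ℕ) : ℝ) := by push_cast; linarith [(Nat.cast_nonneg n : (0 : ℝ) ≤ n)]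
    have h3 : B ≤ (n + 2 : ℕ) * B := le_mul_of_one_le_left hB0 h2
    exact h3.trans (le_mul_of_one_le_left (by positivity) h1)
  have hw : (1 + ‖w‖) ^ (n + 1) * I ≤ 2 ^ (n + 1) * (2 ^ (n + 1) * ((n + 2 : ℕ) * B)) := by
    by_cases hw1 : ‖w‖ ≤ 1
    · have : (1 + ‖w‖) ^ (n + 1) ≤ 2 ^ (n + 1) := by gcongr; linarith
      calc _ ≤ 2 ^ (n + 1) * B := by gcongr
        _ ≤ _ := by gcongr
    · push Not at hw1
      obtain ⟨i, hi⟩ : ∃ i, ‖w‖ ≤ |w i| := by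
        by_contra hcon
        push Not at hcon
        have := (pi_norm_lt_iff (x := w) (r := ‖w‖) (by linarith)).mpr fun i => by
          rw [Real.norm_eq_abs]; exact hcon i
        exact lt_irrefl _ this
      calc (1 + ‖w‖) ^ (n + 1) * I ≤ (2 * |w i|) ^ (n + 1) * I := by
            gcongr; linarith
        _ = 2 ^ (n + 1) * (|w i| ^ (n + 1) * I) := by rw [mul_pow]; ring
        _ ≤ _ := mul_le_mul_of_nonneg_left (hIi i) (by positivity)
  rw [← div_eq_mul_inv, le_div_iff₀ (by positivity), mul_comm]
  refine hw.trans (le_of_eq ?_)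
  rw [hB]; ring

lemma chi_neg_left {n : ℕ} (m x : Fin n → ℝ) : chi (-m) x * chi m x = 1 := by
  unfold chi
  rw [← Complex.exp_add, ← Complex.exp_zero]
  congr 1
  simp only [Pi.neg_apply, neg_mul, Finset.sum_neg_distrib]
  push_cast; ring

lemma schwartz_decay0 {n : ℕ} (f : SchwartzMap (Fin n → ℝ) ℂ) :
    ∃ C : ℝ, ∀ x, (1 + ‖x‖) ^ (n + 1) * ‖f x‖ ≤ C := by
  obtain ⟨C, _, h⟩ := decay_all f (n + 1) 0
  refine ⟨C, fun x => ?_⟩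
  have := h 0 le_rfl x
  rw [norm_iteratedFDeriv_zero, ← div_eq_mul_inv, le_div_iff₀ (by positivity), mul_comm] at this
  exact this

lemma prod_decay0 {n : ℕ} (f g : SchwartzMap (Fin n → ℝ) ℂ) (m : Fin n → ℝ) :
    ∃ C : ℝ, 0 ≤ C ∧ ∀ x, (1 + ‖x‖) ^ (n + 1) * ‖f (x - m) * g x‖ ≤ C := by
  obtain ⟨C, hC, h⟩ := prod_decay f g (n + 1) 0
  refine ⟨C * ((1 + ‖m‖) ^ (n + 1))⁻¹, by positivity, fun x => ?_⟩
  have := h 0 le_rfl m x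
  rw [norm_iteratedFDeriv_zero, ← div_eq_mul_inv _ ((1 + ‖x‖) ^ (n + 1)),
    le_div_iff₀ (by positivity), mul_comm] at this
  exact this

lemma change_var {n : ℕ} (N : ℕ) (hN : 1 ≤ N) (t m : Fin n → ℝ) (h : (Fin n → ℝ) → ℂ) :
    ∫ u, chi m u * h ((N : ℝ)⁻¹ • (u - t))
      = (N : ℂ) ^ n * (chi m t * ∫ y, chi ((N : ℝ) • m) y * h y) := by
  have hN0 : (N : ℝ) ≠ 0 := by positivity
  rw [← integral_add_right_eq_self (fun u => chi m u * h ((N : ℝ)⁻¹ • (u - t))) t]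
  have e : ∀ u : Fin n → ℝ, chi m (u + t) * h ((N : ℝ)⁻¹ • (u + t - t))
      = chi m t * (fun y => chi ((N : ℝ) • m) y * h y) ((N : ℝ)⁻¹ • u) := by
    intro u
    have : chi ((N : ℝ) • m) ((N : ℝ)⁻¹ • u) = chi m u := by
      unfold chi
      congr 3
      refine Finset.sum_congr rfl fun i _ => ?_
      simp only [Pi.smul_apply, smul_eq_mul]
      field_simp
    simp only [this]
    rw [chi_add, add_sub_cancel_right]
    ring
  simp_rw [e]
  rw [integral_const_mul, Measure.integral_comp_smul volume (fun y => chi ((N : ℝ) • m) y * h y)]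
  have : |(((N : ℝ)⁻¹) ^ Module.finrank ℝ (Fin n → ℝ))⁻¹| = (N : ℝ) ^ n := by
    rw [Module.finrank_fin_fun, inv_pow, inv_inv, abs_of_nonneg (by positivity)]
  rw [this, Complex.real_smul]
  push_cast
  ring

lemma dual_lattice_sum {n : ℕ} (N : ℕ) (hN : 1 ≤ N) (t : Fin n → ℝ) (f g : SchwartzMap (Fin n → ℝ) ℂ)
    (m : Fin n → ℝ)
    (hs : Summable fun p : Fin n → ℤ =>
      chi (zc p) t * ∫ y, chi ((N : ℝ) • zc p) y * (f (y - m) * g y)) :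
    ∑' p : Fin n → ℤ, chi (zc p) t * ∫ y, chi ((N : ℝ) • zc p) y * (f (y - m) * g y)
      = ((N : ℂ) ^ n)⁻¹ * ∑' l : Fin n → ℤ,
          f ((N : ℝ)⁻¹ • (zc l - t) - m) * g ((N : ℝ)⁻¹ • (zc l - t)) := by
  have hN0 : (N : ℂ) ^ n ≠ 0 := pow_ne_zero _ (by exact_mod_cast (by omega : N ≠ 0))
  have hNr : (1 : ℝ) ≤ N := by exact_mod_cast hN
  obtain ⟨C, hC, hd⟩ := prod_decay0 f g m
  let h : (Fin n → ℝ) → ℂ := fun y => f (y - m) * g y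
  have hcont : Continuous h := by
    have := f.continuous
    have := g.continuous
    fun_prop
  have hcv : ∀ p : Fin n → ℤ, ∫ u, chi (zc p) u * h ((N : ℝ)⁻¹ • (u - t))
      = (N : ℂ) ^ n * (chi (zc p) t * ∫ y, chi ((N : ℝ) • zc p) y * h y) :=
    fun p => change_var N hN t (zc p) h
  have hp := poisson (fun u => h ((N : ℝ)⁻¹ • (u - t))) (by fun_prop)
    (C * (N * (1 + ‖t‖)) ^ (n + 1)) (by
      intro u
      set y := (N : ℝ)⁻¹ • (u - t) with hy
      have h1 : 1 + ‖u‖ ≤ (1 + ‖y‖) * (N * (1 + ‖t‖)) := by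
        have a1 := peetre (-t) u
        rw [neg_add_eq_sub, norm_neg] at a1
        have a2 : u - t = (N : ℝ) • y := by
          rw [hy, smul_smul, mul_inv_cancel₀ (by positivity), one_smul]
        rw [a2, norm_smul, Real.norm_of_nonneg (by positivity)] at a1
        refine a1.trans ?_
        rw [← mul_assoc]
        gcongr
        nlinarith [norm_nonneg y]
      calc (1 + ‖u‖) ^ (n + 1) * ‖h y‖ ≤ ((1 + ‖y‖) * (N * (1 + ‖t‖))) ^ (n + 1) * ‖h y‖ := by gcongr
        _ = ((1 + ‖y‖) ^ (n + 1) * ‖h y‖) * (N * (1 + ‖t‖)) ^ (n + 1) := by rw [mul_pow]; ring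
        _ ≤ _ := by gcongr; exact hd y)
    ((hs.mul_left ((N : ℂ) ^ n)).congr fun p => (hcv p).symm)
  simp_rw [hcv] at hp
  rw [tsum_mul_left] at hp
  rw [eq_inv_mul_iff_mul_eq₀ hN0]
  exact hp

lemma rho_term {n : ℕ} (N : ℕ) (θ : (Fin n → ℝ) × (Fin n → ℝ)) (f g : (Fin n → ℝ) → ℂ)
    (w : (Fin n → ℤ) × (Fin n → ℤ)) :
    Complex.exp (-(2 * Real.pi * Complex.I) * ((sigmaR n θ (castVec n w) : ℝ) : ℂ)) *
        ∫ y : Fin n → ℝ,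
          rho n N (castVec n w)
            (Complex.exp (Real.pi * Complex.I * ((QR n (castVec n w) : ℝ) : ℂ))) f y * g y
      = chi (-θ.2) (zc w.1) * (chi (zc w.2) θ.1 *
          ∫ y, chi ((N : ℝ) • zc w.2) y * (f (y - zc w.1) * g y)) := by
  rw [← mul_assoc]
  congr 1
  · unfold chi sigmaR castVec zc
    rw [← Complex.exp_add]
    congr 1
    simp only [Pi.neg_apply, neg_mul, Finset.sum_neg_distrib]
    push_cast; ring
  · refine integral_congr_ae (Filter.Eventually.of_forall fun y => ?_)
    simp only
    rw [← mul_assoc]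
    congr 1
    unfold rho
    congr 1
    rw [← Complex.exp_nat_mul, ← Complex.exp_add]
    unfold chi
    congr 1
    simp only [Pi.smul_apply, smul_eq_mul, mul_assoc, ← Finset.mul_sum]
    simp only [castVec, zc]
    push_cast; ring

/-- the shear `(m,k) ↦ (k-m,k)` -/
def shear (n : ℕ) : (Fin n → ℤ) × (Fin n → ℤ) ≃ (Fin n → ℤ) × (Fin n → ℤ) where
  toFun p := (p.2 - p.1, p.2)
  invFun p := (p.2 - p.1, p.2)
  left_inv p := by simp
  right_inv p := by simp

/-- division with remainder, coordinatewise -/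
def dm (n N : ℕ) [NeZero N] : (Fin n → ℤ) ≃ (Fin n → Fin N) × (Fin n → ℤ) :=
  ((Equiv.piCongrRight fun _ => Int.divModEquiv N).trans
    (Equiv.arrowProdEquivProdArrow (Fin n) (fun _ => ℤ) (fun _ => Fin N))).trans (Equiv.prodComm _ _)

lemma dm_symm (n N : ℕ) [NeZero N] (j : Fin n → Fin N) (k : Fin n → ℤ) (i : Fin n) :
    (dm n N).symm (j, k) i = k i * N + ((j i : ℕ) : ℤ) := by
  simp [dm, Int.divModEquiv, Equiv.arrowProdEquivProdArrow]

/-- Poisson summation formula for the projector `P_{N,θ}`: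
`Σ_{w∈ℤ^{2n}} e^{−2πiσ(θ,w)} ∫ (ρ_N(w,e^{πiQ(w)})f) g
  = N^{−n} Σ_{j∈{0,…,N−1}ⁿ} (Σ_k e^{2πi⟨θ₂,k⟩} f(k+(j−θ₁)/N)) (Σ_k e^{−2πi⟨θ₂,k⟩} g(k+(j−θ₁)/N))`,
all series converging absolutely. -/
theorem projector_poisson (n N : ℕ) (hN : 1 ≤ N) (θ : (Fin n → ℝ) × (Fin n → ℝ))
    (f g : SchwartzMap ((Fin n) → ℝ) ℂ) :
    Summable (fun w : (Fin n → ℤ) × (Fin n → ℤ) =>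
      ‖Complex.exp (-(2 * Real.pi * Complex.I) * ((sigmaR n θ (castVec n w) : ℝ) : ℂ)) *
        ∫ y : Fin n → ℝ,
          rho n N (castVec n w)
            (Complex.exp (Real.pi * Complex.I * ((QR n (castVec n w) : ℝ) : ℂ))) (⇑f) y
            * g y‖) ∧
    (∀ j : Fin n → Fin N,
      Summable (fun k : Fin n → ℤ =>
        ‖Complex.exp (2 * Real.pi * Complex.I * ((∑ i : Fin n, θ.2 i * (k i : ℝ) : ℝ) : ℂ))
          * f (fun i => (k i : ℝ) + (((j i : ℕ) : ℝ) - θ.1 i) / N)‖) ∧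
      Summable (fun k : Fin n → ℤ =>
        ‖Complex.exp (-(2 * Real.pi * Complex.I) * ((∑ i : Fin n, θ.2 i * (k i : ℝ) : ℝ) : ℂ))
          * g (fun i => (k i : ℝ) + (((j i : ℕ) : ℝ) - θ.1 i) / N)‖)) ∧
    (∑' w : (Fin n → ℤ) × (Fin n → ℤ),
        Complex.exp (-(2 * Real.pi * Complex.I) * ((sigmaR n θ (castVec n w) : ℝ) : ℂ)) *
          ∫ y : Fin n → ℝ,
            rho n N (castVec n w)
              (Complex.exp (Real.pi * Complex.I * ((QR n (castVec n w) : ℝ) : ℂ))) (⇑f) y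
              * g y)
      = ((N : ℂ) ^ n)⁻¹ *
          ∑ j : Fin n → Fin N,
            (∑' k : Fin n → ℤ,
              Complex.exp (2 * Real.pi * Complex.I *
                  ((∑ i : Fin n, θ.2 i * (k i : ℝ) : ℝ) : ℂ))
                * f (fun i => (k i : ℝ) + (((j i : ℕ) : ℝ) - θ.1 i) / N)) *
            (∑' k : Fin n → ℤ,
              Complex.exp (-(2 * Real.pi * Complex.I) *
                  ((∑ i : Fin n, θ.2 i * (k i : ℝ) : ℝ) : ℂ))
                * g (fun i => (k i : ℝ) + (((j i : ℕ) : ℝ) - θ.1 i) / N)) := by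
  have : NeZero N := ⟨by omega⟩
  have hNr : (1 : ℝ) ≤ N := by exact_mod_cast hN
  have hN0 : (N : ℝ) ≠ 0 := by positivity
  simp_rw [rho_term]
  let X : (Fin n → Fin N) → (Fin n → ℝ) := fun j i => (((j i : ℕ) : ℝ) - θ.1 i) / N
  have eP : ∀ (j : Fin n → Fin N) (k : Fin n → ℤ),
      (fun i => (k i : ℝ) + (((j i : ℕ) : ℝ) - θ.1 i) / N) = X j + zc k := by
    intro j k; ext i; simp only [X, zc, Pi.add_apply]; ring
  have eA : ∀ k : Fin n → ℤ, Complex.exp (2 * Real.pi * Complex.I *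
      ((∑ i : Fin n, θ.2 i * (k i : ℝ) : ℝ) : ℂ)) = chi θ.2 (zc k) := fun k => rfl
  have eB : ∀ k : Fin n → ℤ, Complex.exp (-(2 * Real.pi * Complex.I) *
      ((∑ i : Fin n, θ.2 i * (k i : ℝ) : ℝ) : ℂ)) = chi (-θ.2) (zc k) := by
    intro k
    unfold chi zc
    congr 1
    simp only [Pi.neg_apply, neg_mul, Finset.sum_neg_distrib]
    push_cast; ring
  simp_rw [eP, eA, eB]
  obtain ⟨Cf, hCf⟩ := schwartz_decay0 f
  obtain ⟨Cg, hCg⟩ := schwartz_decay0 g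
  have hA : ∀ j : Fin n → Fin N, Summable (fun k : Fin n → ℤ => ‖chi θ.2 (zc k) * f (X j + zc k)‖) := by
    intro j
    simp_rw [norm_mul, chi_norm, one_mul]
    exact (summable_decay f Cf hCf (X j)).1
  have hB : ∀ j : Fin n → Fin N,
      Summable (fun k : Fin n → ℤ => ‖chi (-θ.2) (zc k) * g (X j + zc k)‖) := by
    intro j
    simp_rw [norm_mul, chi_norm, one_mul]
    exact (summable_decay g Cg hCg (X j)).1
  obtain ⟨C, hC, hosc⟩ := osc_bound f g
  have hT : Summable (fun w : (Fin n → ℤ) × (Fin n → ℤ) =>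
      ‖chi (-θ.2) (zc w.1) * (chi (zc w.2) θ.1 *
          ∫ y, chi ((N : ℝ) • zc w.2) y * (f (y - zc w.1) * g y))‖) := by
    have hs := ((summable_zc n).mul_of_nonneg (summable_zc n) (fun _ => by positivity)
      (fun _ => by positivity)).mul_left C
    refine Summable.of_nonneg_of_le (fun _ => norm_nonneg _) (fun w => ?_) hs
    rw [norm_mul, norm_mul, chi_norm, chi_norm, one_mul, one_mul, ← mul_assoc]
    refine (hosc _ _).trans ?_
    gcongr
    rw [norm_smul, Real.norm_of_nonneg (by positivity)]
    exact le_mul_of_one_le_left (norm_nonneg _) hNr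
  refine ⟨hT, fun j => ⟨hA j, hB j⟩, ?_⟩
  have hT' := hT.of_norm
  rw [hT'.tsum_prod]
  have h1 : ∀ m : Fin n → ℤ, ∑' p : Fin n → ℤ, chi (-θ.2) (zc m) * (chi (zc p) θ.1 *
      ∫ y, chi ((N : ℝ) • zc p) y * (f (y - zc m) * g y))
      = ((N : ℂ) ^ n)⁻¹ * (chi (-θ.2) (zc m) * ∑' l : Fin n → ℤ,
          f ((N : ℝ)⁻¹ • (zc l - θ.1) - zc m) * g ((N : ℝ)⁻¹ • (zc l - θ.1))) := by
    intro m
    have hm := hT'.prod_factor m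
    have hne : chi (-θ.2) (zc m) ≠ 0 := by
      intro h0
      have := chi_norm (-θ.2) (zc m)
      rw [h0] at this; simp at this
    have hm' := (summable_mul_left_iff hne).mp hm
    rw [tsum_mul_left, dual_lattice_sum N hN θ.1 f g (zc m) hm']
    ring
  simp_rw [h1]
  rw [tsum_mul_left]
  congr 1
  have hprod : ∀ j : Fin n → Fin N, Summable (fun p : (Fin n → ℤ) × (Fin n → ℤ) =>
      (chi θ.2 (zc (p.2 - p.1)) * f (X j + zc (p.2 - p.1))) *
        (chi (-θ.2) (zc p.2) * g (X j + zc p.2))) := by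
    intro j
    have := (summable_mul_of_summable_norm (hA j) (hB j))
    exact (shear n).summable_iff.mpr this
  have hterm : ∀ (j : Fin n → Fin N) (m k : Fin n → ℤ),
      (chi θ.2 (zc (k - m)) * f (X j + zc (k - m))) * (chi (-θ.2) (zc k) * g (X j + zc k))
      = chi (-θ.2) (zc m) * (f (X j + zc k - zc m) * g (X j + zc k)) := by
    intro j m k
    have a1 : chi (-θ.2) (zc k) = chi (-θ.2) (zc (k - m)) * chi (-θ.2) (zc m) := by
      rw [← chi_add, ← zc_add, sub_add_cancel]
    have a2 := chi_neg_left θ.2 (zc (k - m))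
    have a3 : X j + zc (k - m) = X j + zc k - zc m := by rw [zc_sub]; abel
    rw [a1, a3]
    linear_combination (chi (-θ.2) (zc m) * (f (X j + zc k - zc m) * g (X j + zc k))) * a2
  have h2 : ∀ m : Fin n → ℤ, chi (-θ.2) (zc m) * ∑' l : Fin n → ℤ,
        f ((N : ℝ)⁻¹ • (zc l - θ.1) - zc m) * g ((N : ℝ)⁻¹ • (zc l - θ.1))
      = ∑ j : Fin n → Fin N, ∑' k : Fin n → ℤ,
        (chi θ.2 (zc (k - m)) * f (X j + zc (k - m))) * (chi (-θ.2) (zc k) * g (X j + zc k)) := by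
    intro m
    rw [← tsum_mul_left, ← (dm n N).symm.tsum_eq]
    have e3 : ∀ q : (Fin n → Fin N) × (Fin n → ℤ),
        (N : ℝ)⁻¹ • (zc ((dm n N).symm q) - θ.1) = X q.1 + zc q.2 := by
      rintro ⟨j, k⟩
      ext i
      simp only [X, zc, Pi.add_apply, Pi.smul_apply, Pi.sub_apply, smul_eq_mul, dm_symm]
      push_cast
      field_simp
      ring
    simp_rw [e3, ← hterm]
    have hfib : ∀ j : Fin n → Fin N, Summable fun k : Fin n → ℤ =>
        (chi θ.2 (zc (k - m)) * f (X j + zc (k - m))) * (chi (-θ.2) (zc k) * g (X j + zc k)) :=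
      fun j => (hprod j).prod_factor m
    rw [Summable.tsum_prod, tsum_fintype]
    rw [← summable_norm_iff, summable_prod_of_nonneg (fun _ => norm_nonneg _)]
    exact ⟨fun j => (hfib j).norm, Summable.of_finite⟩
  simp_rw [h2]
  rw [Summable.tsum_finsetSum fun j _ => (hprod j).prod]
  refine Finset.sum_congr rfl fun j _ => ?_
  rw [← (hprod j).tsum_prod, tsum_mul_tsum_of_summable_norm (hA j) (hB j),
    ← (shear n).tsum_eq]
  simp [shear]
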